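/- Let A be an abelian group that contains a subgroup isomorphic to the Baer–Specker group ℤ^ω (by Nunke's characterisation of slender groups, this holds for every non-slender ℵ₁-free abelian group). Then there exists a family (G_α)_{α ∈ I} of subgroups of A, indexed by a set I of cardinality 2^{ℵ₁}, such that: (i) each G_α is ℵ₁-free, of cardinality ℵ₁, and not free; and (ii) whenever α ≠ β, the groups G_α and G_β are almost disjoint. -/

import Mathlib

universe u

/-
Let `P i` be infinite sets of primes, indexed by a set `ι` of cardinality `ℵ₁`, and consider the
direct sum over `ι` of the groups of fractions with squarefree denominators and all prime factors
of the denominator in `P i`. Modulo finitely supported sequences, `ℤ^ω` contains a rational vector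
space of uncountable dimension, and pulling the direct sum back to `ℤ^ω` gives an extension `G` of
it by a countable group. As a subgroup of `ℤ^ω`, `G` is `ℵ₁`-free by Specker's theorem. It is not
free: each standard basis vector is divisible by infinitely many primes modulo the countable
kernel, while in a free group only countably many elements are divisible by infinitely many
integers modulo a given countable set.

Suppose that `H` embeds in the groups built from `P` and from `P'`, where `P i ∩ P' j` is always
finite. A subgroup of `H` containing every element whose coordinates, in one of the direct sums,
are supported where its own elements are has a quotient that embeds in both direct sums. In this
quotient an element of the pure closure of a finitely generated subgroup has a denominator from
each of the two sums, and the greatest common divisor of the two is bounded, so such pure closures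
are finitely generated and the quotient is `ℵ₁`-free by Pontryagin's criterion. Subgroups of this
kind exhaust `H` in countable steps, hence `H` is free. Countably many exceptional indices can be
absorbed into the kernel, so it suffices to find `2^ℵ₁` families `P` such that, for any two of
them, only countably many `P i` meet some `P' j` in an infinite set. Take branches of the binary
tree, and let the branch at `w < ω₁` encode `(w, X ∩ w)`, for `X ⊆ ω₁`.
-/

namespace AlmostDisjoint

open Set Submodule

section Exhaustion

variable {R M : Type*} [Ring R] [AddCommGroup M] [Module R M]

theorem exists_linearIndepOn_union_span_eq {B : Set M} (hB : LinearIndepOn R id B)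
    {N : Submodule R M} (hBN : span R B ≤ N) [Module.Free R (N.map (span R B).mkQ)] :
    ∃ C : Set M, LinearIndepOn R id (B ∪ C) ∧ span R (B ∪ C) = N := by
  let b := Module.Free.chooseBasis R (N.map (span R B).mkQ)
  let b' : _ → M ⧸ span R B := (N.map (span R B).mkQ).subtype ∘ b
  have hb' : LinearIndependent R b' := b.linearIndependent.map' _ (ker_subtype _)
  have hspan : span R (range b') = N.map (span R B).mkQ := by
    rw [range_comp, ← Submodule.map_span, b.span_eq, map_subtype_top]
  have hsurj : SurjOn (span R B).mkQ N (range b') := range_subset_iff.2 fun i => (b i).2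
  obtain ⟨C, -, hC⟩ := hsurj.exists_bijOn_subset
  refine ⟨C, hB.union_id_of_quotient subset_span ?_, ?_⟩
  · rw [linearIndepOn_iff_image hC.injOn, hC.image_eq]
    exact hb'.linearIndepOn_id
  · have hmap : (span R C).map (span R B).mkQ = N.map (span R B).mkQ := by
      rw [Submodule.map_span, hC.image_eq, hspan]
    rw [span_union, ← comap_map_mkQ, hmap, comap_map_mkQ, sup_eq_right.2 hBN]

/-- This is the theorem on continuous well-ordered chains with free factors, in a form where Zorn's
lemma, applied to bases, replaces the chain. -/
theorem free_of_sSup_mem (F : Set (Submodule R M))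
    (hchain : ∀ c ⊆ F, IsChain (· ≤ ·) c → sSup c ∈ F)
    (hstep : ∀ N ∈ F, N ≠ ⊤ → ∃ N' ∈ F, N < N' ∧ Module.Free R (N'.map N.mkQ)) :
    Module.Free R M := by
  obtain ⟨B, hB⟩ := zorn_subset {B | LinearIndepOn R id B ∧ span R B ∈ F} fun c hc hcc => by
    refine ⟨⋃₀ c, ⟨linearIndepOn_sUnion_of_directed hcc.directedOn fun B hB => (hc hB).1, ?_⟩,
      fun B => subset_sUnion_of_mem⟩
    rw [sUnion_eq_biUnion, span_iUnion₂, ← sSup_image]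
    refine hchain _ (image_subset_iff.2 fun B hB => (hc hB).2) ?_
    exact hcc.image_of_map_rel _ _ (span R) fun _ _ => span_mono
  suffices htop : span R B = ⊤ from
    Module.Free.of_basis (Module.Basis.mk (v := ((↑) : B → M)) hB.prop.1
      (by rw [Subtype.range_coe, htop]))
  by_contra htop
  obtain ⟨N, hN, hlt, _⟩ := hstep _ hB.prop.2 htop
  obtain ⟨C, hindep, hspan⟩ := exists_linearIndepOn_union_span_eq hB.prop.1 hlt.le
  have hBC : B = B ∪ C := hB.eq_of_subset ⟨hindep, hspan ▸ hN⟩ subset_union_left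
  exact hlt.ne (by rw [← hspan, ← hBC])

theorem free_of_iSup_nat_eq_top (L : ℕ →o Submodule R M) (hbot : L 0 = ⊥) (htop : ⨆ n, L n = ⊤)
    (hfree : ∀ n, Module.Free R ((L (n + 1)).map (L n).mkQ)) : Module.Free R M := by
  refine free_of_sSup_mem {N | N ≤ ⨆ (n) (_ : L n ≤ N), L n} (fun c hc _ => ?_) fun N hN hN' => ?_
  · exact sSup_le fun N hN => (hc hN).trans (biSup_mono fun n hn => hn.trans (le_sSup hN))
  · obtain ⟨n, hn, hn'⟩ : ∃ n, L n ≤ N ∧ ¬ L (n + 1) ≤ N := by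
      by_contra! hsucc
      exact hN' (top_le_iff.1 (htop ▸ iSup_le (Nat.rec (hbot ▸ bot_le) hsucc)))
    have hNn : N = L n := by
      refine le_antisymm (hN.trans (iSup₂_le fun m hm => L.monotone ?_)) hn
      by_contra! hnm
      exact hn' ((L.monotone hnm).trans hm)
    have hmem : L (n + 1) ≤ ⨆ (m) (_ : L m ≤ L (n + 1)), L m := le_iSup₂_of_le (n + 1) le_rfl le_rfl
    subst hNn
    exact ⟨L (n + 1), hmem, (L.monotone n.le_succ).lt_of_not_ge hn', hfree n⟩

end Exhaustion

section PureClosure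

variable {R M : Type*} [CommRing R] [AddCommGroup M] [Module R M]

/-- The pure closure of a submodule, i.e. the preimage of the torsion of the quotient; it serves to
state Pontryagin's criterion. -/
def pureClosure (F : Submodule R M) : Submodule R M :=
  (torsion R (M ⧸ F)).comap F.mkQ

theorem le_pureClosure (F : Submodule R M) : F ≤ pureClosure F :=
  F.le_comap_mkQ _

variable [IsDomain R]

theorem mem_pureClosure {F : Submodule R M} {x : M} :
    x ∈ pureClosure F ↔ ∃ a : R, a ≠ 0 ∧ a • x ∈ F := by
  simp only [pureClosure, mem_comap, mem_torsion_iff, Subtype.exists, exists_prop, mkQ_apply,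
    mem_nonZeroDivisors_iff_ne_zero, Submonoid.mk_smul, ← Quotient.mk_smul, Quotient.mk_eq_zero]

theorem pureClosure_mono : Monotone (pureClosure : Submodule R M → Submodule R M) := by
  intro F F' hF x hx
  obtain ⟨a, ha, hax⟩ := mem_pureClosure.1 hx
  exact mem_pureClosure.2 ⟨a, ha, hF hax⟩

theorem pureClosure_bot [Module.IsTorsionFree R M] : pureClosure (⊥ : Submodule R M) = ⊥ := by
  refine (Submodule.eq_bot_iff _).2 fun x hx => ?_
  obtain ⟨a, ha, hax⟩ := mem_pureClosure.1 hx
  exact (smul_eq_zero.1 hax).resolve_left ha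

theorem isTorsionFree_quotient_pureClosure (F : Submodule R M) :
    Module.IsTorsionFree R (M ⧸ pureClosure F) := by
  refine Module.IsTorsionFree.of_smul_eq_zero fun a y hay => or_iff_not_imp_left.2 fun ha => ?_
  obtain ⟨x, rfl⟩ := mkQ_surjective _ y
  rw [← map_smul, mkQ_apply, Quotient.mk_eq_zero, mem_pureClosure] at hay
  obtain ⟨b, hb, hbx⟩ := hay
  rw [mkQ_apply, Quotient.mk_eq_zero]
  exact mem_pureClosure.2 ⟨b * a, mul_ne_zero hb ha, by rwa [mul_smul]⟩

/-- **Pontryagin's criterion**. -/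
theorem free_of_forall_pureClosure_fg [IsPrincipalIdealRing R] [Module.IsTorsionFree R M]
    [Countable M] (h : ∀ F : Submodule R M, F.FG → (pureClosure F).FG) : Module.Free R M := by
  obtain ⟨e, he⟩ := exists_surjective_nat M
  let F : ℕ → Submodule R M := fun n => span R (e '' Iio n)
  have hF : Monotone F := fun m n hmn => span_mono (image_mono (Iio_subset_Iio hmn))
  refine free_of_iSup_nat_eq_top ⟨fun n => pureClosure (F n), pureClosure_mono.comp hF⟩ ?_ ?_ ?_
  · simp [F, pureClosure_bot]
  · refine eq_top_iff'.2 fun x => ?_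
    obtain ⟨n, rfl⟩ := he x
    exact le_iSup (fun n => pureClosure (F n)) (n + 1)
      (le_pureClosure _ (subset_span (mem_image_of_mem e n.lt_succ_self)))
  · intro n
    have hfg : (pureClosure (F (n + 1))).FG := h _ (fg_span ((finite_Iio _).image e))
    have := isTorsionFree_quotient_pureClosure (F n)
    have := Module.Finite.iff_fg.2 (hfg.map (pureClosure (F n)).mkQ)
    exact Module.free_of_finite_type_torsion_free'

theorem fg_of_forall_smul_mem [IsNoetherianRing R] [Module.IsTorsionFree R M]
    {N L : Submodule R M} (hL : L.FG) {d : R} (hd : d ≠ 0) (h : ∀ x ∈ N, d • x ∈ L) : N.FG := by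
  have := isNoetherian_of_fg_of_noetherian L hL
  exact fg_of_fg_map_injective (LinearMap.lsmul R M d) (smul_right_injective M hd)
    (isNoetherian_submodule.1 this _ (map_le_iff_le_comap.2 h))

end PureClosure

section Aleph1Free

/-- `ℵ₁`-free modules. Over `ℤ`, where submodules are subgroups, these are the `ℵ₁`-free groups. -/
def IsAleph1Free (R M : Type*) [Semiring R] [AddCommMonoid M] [Module R M] : Prop :=
  ∀ N : Submodule R M, Countable N → Module.Free R N

theorem IsAleph1Free.of_injective {R M M' : Type*} [Ring R] [AddCommGroup M] [Module R M]
    [AddCommGroup M'] [Module R M'] (hM' : IsAleph1Free R M') (f : M →ₗ[R] M')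
    (hf : Function.Injective f) : IsAleph1Free R M := fun N _ =>
  have e := N.equivMapOfInjective f hf
  have := hM' (N.map f) e.symm.injective.countable
  Module.Free.of_equiv e.symm

variable {R : Type*} [CommRing R] [IsDomain R] [IsPrincipalIdealRing R]

theorem exists_finset_forall_eq_zero {ι : Type*} {F : Submodule R (ι → R)} (hF : F.FG) :
    ∃ s : Finset ι, ∀ x ∈ F, (∀ i ∈ s, x i = 0) → x = 0 := by
  classical
  have := Module.Finite.iff_fg.2 hF
  let ev : ι → Module.Dual R F := fun i => LinearMap.proj i ∘ₗ F.subtype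
  obtain ⟨t, ht, hspan⟩ :=
    (fg_span_iff_fg_span_finset_subset (R := R) (range ev)).1 (IsNoetherian.noetherian _)
  obtain ⟨s, -, rfl⟩ := Finset.subset_set_image_iff.1 (image_univ (f := ev) ▸ ht)
  refine ⟨s, fun x hx hs => funext fun i => ?_⟩
  have hker : span R (range ev) ≤ LinearMap.ker (Module.Dual.eval R F ⟨x, hx⟩) := by
    rw [hspan, span_le, Finset.coe_image, image_subset_iff]
    exact hs
  exact hker (subset_span (mem_range_self i))

theorem isAleph1Free_pi (ι : Type*) : IsAleph1Free R (ι → R) := by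
  refine fun N _ => free_of_forall_pureClosure_fg fun F hF => ?_
  obtain ⟨s, hs⟩ := exists_finset_forall_eq_zero (hF.map N.subtype)
  let restrict : pureClosure F →ₗ[R] s → R :=
    LinearMap.funLeft R R (↑) ∘ₗ N.subtype ∘ₗ (pureClosure F).subtype
  suffices hinj : Function.Injective restrict from
    Module.Finite.iff_fg.1 (Module.Finite.of_injective restrict hinj)
  refine (injective_iff_map_eq_zero _).2 fun x hx => ?_
  obtain ⟨a, ha, hax⟩ := mem_pureClosure.1 x.2
  have hzero : a • (x : N) = 0 := Subtype.ext <| hs _ (mem_map_of_mem hax) fun i hi =>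
    smul_eq_zero_of_right a (congrFun hx ⟨i, hi⟩)
  exact Subtype.ext ((smul_eq_zero.1 hzero).resolve_left ha)

end Aleph1Free

section Support

theorem countable_preimage_of_countable_ker {R M M' : Type*} [Ring R] [AddCommGroup M] [Module R M]
    [AddCommGroup M'] [Module R M'] {f : M →ₗ[R] M'} (hf : (LinearMap.ker f : Set M).Countable)
    {s : Set M'} (hs : s.Countable) : (f ⁻¹' s).Countable := by
  rw [← biUnion_preimage_singleton]
  refine hs.biUnion fun y _ => ?_
  obtain h | ⟨x, rfl⟩ := (f ⁻¹' {y}).eq_empty_or_nonempty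
  · simp only [h, countable_empty]
  · refine (hf.image (x + ·)).mono ?_
    exact fun z hz => ⟨z - x, LinearMap.sub_mem_ker_iff.2 hz, add_sub_cancel x z⟩

variable {R H ι ι' K K' : Type*} [Ring R] [AddCommGroup H] [Module R H]
  [AddCommGroup K] [Module R K] [AddCommGroup K'] [Module R K']

variable (R) in
theorem countable_supported [Countable K] {s : Set ι} (hs : s.Countable) :
    (Finsupp.supported K R s : Set (ι →₀ K)).Countable :=
  have := hs.to_subtype
  countable_coe_iff.1 (Finsupp.supportedEquivFinsupp (M := K) (R := R) s).injective.countable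

/-- For a map `κ` into a direct sum of copies of `K`, the set of indices at which some element of
`κ N` does not vanish. -/
def supportUnion (κ : H →ₗ[R] ι →₀ K) (N : Submodule R H) : Set ι :=
  ⋃ h ∈ N, (κ h).support

/-- For a map `κ` into a direct sum of copies of `K`, the submodule of all elements whose images
under `κ` are supported on the indices that occur in the supports of the elements of `κ N`. -/
noncomputable def supportHull (κ : H →ₗ[R] ι →₀ K) (N : Submodule R H) : Submodule R H :=
  (Finsupp.supported K R (supportUnion κ N)).comap κ

theorem support_subset_supportUnion (κ : H →ₗ[R] ι →₀ K) {N : Submodule R H} {h : H} (hh : h ∈ N) :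
    ↑(κ h).support ⊆ supportUnion κ N :=
  subset_biUnion_of_mem (u := fun h => ((κ h).support : Set ι)) hh

theorem supportUnion_mono (κ : H →ₗ[R] ι →₀ K) : Monotone (supportUnion κ) :=
  fun _ _ hN => biUnion_subset_biUnion_left hN

theorem le_supportHull (κ : H →ₗ[R] ι →₀ K) (N : Submodule R H) : N ≤ supportHull κ N :=
  fun _ hh => support_subset_supportUnion κ hh

theorem supportHull_mono (κ : H →ₗ[R] ι →₀ K) : Monotone (supportHull κ) :=
  fun _ _ hN => comap_mono (Finsupp.supported_mono (supportUnion_mono κ hN))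

theorem supportHull_bot (κ : H →ₗ[R] ι →₀ K) : supportHull κ ⊥ = LinearMap.ker κ := by
  simp [supportHull, supportUnion]

theorem supportHull_iSup_le (κ : H →ₗ[R] ι →₀ K) {α : Type*} [Nonempty α]
    {N : α → Submodule R H} (hN : Directed (· ≤ ·) N) :
    supportHull κ (⨆ a, N a) ≤ ⨆ a, supportHull κ (N a) := by
  intro x hx
  have hcover : ((κ x).support : Set ι) ⊆ ⋃ a, supportUnion κ (N a) := by
    refine Subset.trans hx (iUnion₂_subset fun h hh => ?_)
    obtain ⟨a, ha⟩ := (mem_iSup_of_directed N hN).1 hh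
    exact subset_iUnion_of_subset a (support_subset_supportUnion κ ha)
  obtain ⟨a, ha⟩ := Directed.exists_mem_subset_of_finset_subset_biUnion
    (hN.mono_comp _ (supportUnion_mono κ)) hcover
  exact mem_iSup_of_mem a ha

theorem countable_map_mkQ_supportHull [Countable K] {κ : H →ₗ[R] ι →₀ K} {N M : Submodule R H}
    (hN : ((supportHull κ N).map N.mkQ : Set (H ⧸ N)).Countable)
    (hM : (M.map N.mkQ : Set (H ⧸ N)).Countable) :
    ((supportHull κ M).map N.mkQ : Set (H ⧸ N)).Countable := by
  let S : Submodule R (ι →₀ K) := Finsupp.supported K R (supportUnion κ N)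
  let g : H ⧸ N →ₗ[R] (ι →₀ K) ⧸ S := N.mapQ S κ (le_supportHull κ N)
  have hg : (LinearMap.ker g : Set (H ⧸ N)).Countable := (ker_mapQ N S κ _).symm ▸ hN
  -- Representatives of `M` modulo `N` enlarge the support union of `N` by a countable set only.
  obtain ⟨Z, -, hZ⟩ := exists_subset_bijOn (M : Set H) N.mkQ
  have hZc : Z.Countable := countable_of_injective_of_countable_image hZ.injOn (hZ.image_eq ▸ hM)
  let D : Set ι := ⋃ z ∈ Z, (κ z).support
  have hD : (Finsupp.supported K R D : Set (ι →₀ K)).Countable :=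
    countable_supported R (hZc.biUnion fun z _ => (κ z).support.countable_toSet)
  have hMND : supportUnion κ M ⊆ supportUnion κ N ∪ D := by
    classical
    refine iUnion₂_subset fun m hm => ?_
    obtain ⟨z, hz, hzm⟩ := hZ.surjOn (mem_image_of_mem _ hm)
    have hmz : m - z ∈ N := (Submodule.Quotient.eq N).1 hzm.symm
    rw [← sub_add_cancel m z, map_add]
    refine Subset.trans (Finset.coe_subset.2 Finsupp.support_add) ?_
    rw [Finset.coe_union]
    exact union_subset_union (support_subset_supportUnion κ hmz)
      (subset_biUnion_of_mem (u := fun z => ((κ z).support : Set ι)) hz)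
  have hmap : (Finsupp.supported K R (supportUnion κ M)).map S.mkQ ≤
      (Finsupp.supported K R D).map S.mkQ := by
    refine (Submodule.map_mono (Finsupp.supported_mono hMND)).trans ?_
    rw [Finsupp.supported_union, Submodule.map_sup, mkQ_map_self, bot_sup_eq]
  refine (countable_preimage_of_countable_ker hg (hD.image S.mkQ)).mono ?_
  rintro _ ⟨x, hx, rfl⟩
  exact hmap (mem_map_of_mem hx)

theorem exists_countable_supportHull_le [Countable K] [Countable K'] {κ : H →ₗ[R] ι →₀ K}
    {κ' : H →ₗ[R] ι' →₀ K'} {N M : Submodule R H}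
    (hN : ((supportHull κ N).map N.mkQ : Set (H ⧸ N)).Countable)
    (hN' : ((supportHull κ' N).map N.mkQ : Set (H ⧸ N)).Countable)
    (hM : (M.map N.mkQ : Set (H ⧸ N)).Countable) :
    ∃ M', M ≤ M' ∧ (M'.map N.mkQ : Set (H ⧸ N)).Countable ∧
      supportHull κ M' ≤ M' ∧ supportHull κ' M' ≤ M' := by
  let T : ℕ → Submodule R H := fun n => (supportHull κ' ∘ supportHull κ)^[n] M
  have hsucc (n : ℕ) : T (n + 1) = supportHull κ' (supportHull κ (T n)) :=
    Function.iterate_succ_apply' _ _ _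
  have hTκ (n : ℕ) : supportHull κ (T n) ≤ T (n + 1) := hsucc n ▸ le_supportHull κ' _
  have hTκ' (n : ℕ) : supportHull κ' (T n) ≤ T (n + 1) :=
    hsucc n ▸ supportHull_mono κ' (le_supportHull κ _)
  have hT : Directed (· ≤ ·) T :=
    (monotone_nat_of_le_succ fun n => (le_supportHull κ _).trans (hTκ n)).directed_le
  refine ⟨⨆ n, T n, le_iSup T 0, ?_, ?_, ?_⟩
  · have hTN : Directed (· ≤ ·) fun n => (T n).map N.mkQ :=
      hT.mono_comp (g := Submodule.map N.mkQ) _ fun _ _ => map_mono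
    rw [Submodule.map_iSup, coe_iSup_of_directed _ hTN]
    refine countable_iUnion fun n => ?_
    induction n with
    | zero => exact hM
    | succ n ih =>
      rw [hsucc]
      exact countable_map_mkQ_supportHull hN' (countable_map_mkQ_supportHull hN ih)
  · exact (supportHull_iSup_le κ hT).trans (iSup_le fun n => le_iSup_of_le (n + 1) (hTκ n))
  · exact (supportHull_iSup_le κ' hT).trans (iSup_le fun n => le_iSup_of_le (n + 1) (hTκ' n))

theorem supportHull_sSup_le (κ : H →ₗ[R] ι →₀ K) {c : Set (Submodule R H)} (hc : IsChain (· ≤ ·) c)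
    (hne : c.Nonempty) (hκ : ∀ N ∈ c, supportHull κ N ≤ N) :
    supportHull κ (sSup c) ≤ sSup c := by
  have := hne.to_subtype
  rw [sSup_eq_iSup']
  exact (supportHull_iSup_le κ hc.directed).trans (iSup_mono fun N => hκ N N.2)

theorem exists_lt_supportHull_le [Countable K] [Countable K'] {κ : H →ₗ[R] ι →₀ K}
    {κ' : H →ₗ[R] ι' →₀ K'} (hκ : (LinearMap.ker κ : Set H).Countable) {N : Submodule R H}
    (hN : ((supportHull κ N).map N.mkQ : Set (H ⧸ N)).Countable)
    (hN' : ((supportHull κ' N).map N.mkQ : Set (H ⧸ N)).Countable) (hNtop : N ≠ ⊤) :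
    ∃ M, N < M ∧ (M.map N.mkQ : Set (H ⧸ N)).Countable ∧
      supportHull κ M ≤ M ∧ supportHull κ' M ≤ M := by
  obtain ⟨x, hx⟩ := SetLike.exists_not_mem_of_ne_top N hNtop
  let M := (Finsupp.supported K R ((κ x).support : Set ι)).comap κ
  have hM : (M : Set H).Countable :=
    countable_preimage_of_countable_ker hκ (countable_supported R (κ x).support.countable_toSet)
  obtain ⟨M', hle, hM'⟩ := exists_countable_supportHull_le (M := N ⊔ M) hN hN' <| by
    rw [Submodule.map_sup, mkQ_map_self, bot_sup_eq]
    exact hM.image N.mkQ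
  have hxM : x ∈ M := (Finsupp.mem_supported R (κ x)).2 subset_rfl
  exact ⟨M', lt_of_le_of_ne (le_sup_left.trans hle)
    fun h => hx (h ▸ hle (mem_sup_right hxM)), hM'⟩

theorem free_of_forall_isAleph1Free_quotient [Countable K] [Countable K'] {κ : H →ₗ[R] ι →₀ K}
    {κ' : H →ₗ[R] ι' →₀ K'} (hκ : (LinearMap.ker κ : Set H).Countable)
    (hκ' : (LinearMap.ker κ' : Set H).Countable) (hH : IsAleph1Free R H)
    (hquot : ∀ N : Submodule R H, supportHull κ N ≤ N → supportHull κ' N ≤ N →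
      IsAleph1Free R (H ⧸ N)) : Module.Free R H := by
  refine free_of_sSup_mem (insert ⊥ {N | supportHull κ N ≤ N ∧ supportHull κ' N ≤ N})
    (fun c hcF hc => ?_) fun N hN hNtop => ?_
  · rw [← sSup_sdiff_singleton_bot]
    obtain hc' | hc' := (c \ {⊥}).eq_empty_or_nonempty
    · exact Or.inl (hc' ▸ sSup_empty)
    have hchain : IsChain (· ≤ ·) (c \ {⊥}) := hc.mono sdiff_subset
    have hclosed (N : Submodule R H) (hN : N ∈ c \ {⊥}) := (hcF hN.1).resolve_left hN.2
    exact Or.inr ⟨supportHull_sSup_le κ hchain hc' fun N hN => (hclosed N hN).1,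
      supportHull_sSup_le κ' hchain hc' fun N hN => (hclosed N hN).2⟩
  · have hN : ((supportHull κ N).map N.mkQ : Set (H ⧸ N)).Countable ∧
        ((supportHull κ' N).map N.mkQ : Set (H ⧸ N)).Countable ∧ IsAleph1Free R (H ⧸ N) := by
      obtain rfl | ⟨hN, hN'⟩ := hN
      · rw [supportHull_bot, supportHull_bot]
        exact ⟨hκ.image _, hκ'.image _,
          hH.of_injective (quotEquivOfEqBot ⊥ rfl).toLinearMap (LinearEquiv.injective _)⟩
      · rw [hN.antisymm (le_supportHull κ N), hN'.antisymm (le_supportHull κ' N), mkQ_map_self]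
        exact ⟨countable_singleton 0, countable_singleton 0, hquot N hN hN'⟩
    obtain ⟨M, hNM, hM, hMclosed⟩ := exists_lt_supportHull_le hκ hN.1 hN.2.1 hNtop
    exact ⟨M, Or.inr hMclosed, hNM, hN.2.2 _ hM.to_subtype⟩

end Support

section Fractions

theorem prod_mem_span_pair_prod {R α : Type*} [CommRing R] [DecidableEq α] {p : α → R}
    (hp : Pairwise fun i j => IsCoprime (p i) (p j)) {s t w : Finset α} (hw : s ∩ t ⊆ w) :
    ∏ i ∈ w, p i ∈ Ideal.span {∏ i ∈ s, p i, ∏ i ∈ t, p i} := by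
  obtain ⟨a, b, hab⟩ : IsCoprime (∏ i ∈ s \ t, p i) (∏ i ∈ t \ s, p i) :=
    IsCoprime.prod_left fun i hi => IsCoprime.prod_right fun j hj => hp fun h =>
      (Finset.mem_sdiff.1 hj).2 (h ▸ (Finset.mem_sdiff.1 hi).1)
  refine Ideal.mem_of_dvd _ (Finset.prod_dvd_prod_of_subset _ _ p hw)
    (Ideal.mem_span_pair.2 ⟨a, b, ?_⟩)
  rw [← Finset.prod_inter_mul_prod_sdiff s t, ← Finset.prod_inter_mul_prod_sdiff t s,
    Finset.inter_comm t s]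
  linear_combination (∏ i ∈ s ∩ t, p i) * hab

theorem prod_smul_mem_of_subset {R M α : Type*} [CommRing R] [AddCommGroup M] [Module R M]
    {N : Submodule R M} {p : α → R} {s t : Finset α} (hst : s ⊆ t) {x : M}
    (hx : (∏ i ∈ s, p i) • x ∈ N) : (∏ i ∈ t, p i) • x ∈ N := by
  obtain ⟨d, hd⟩ := Finset.prod_dvd_prod_of_subset s t p hst
  rw [hd, mul_comm, mul_smul]
  exact smul_mem _ d hx

/-- The subgroup of `ℚ` generated by `1` and the reciprocals of the primes in `S`, that is, the
fractions whose reduced denominators are squarefree with all prime factors in `S`. -/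
def primeFractions (S : Set Nat.Primes) : Submodule ℤ ℚ :=
  span ℤ (insert 1 ((fun p : Nat.Primes => (p : ℚ)⁻¹) '' S))

theorem one_mem_primeFractions (S : Set Nat.Primes) : 1 ∈ primeFractions S :=
  subset_span (mem_insert _ _)

theorem inv_mem_primeFractions {S : Set Nat.Primes} {p : Nat.Primes} (hp : p ∈ S) :
    (p : ℚ)⁻¹ ∈ primeFractions S :=
  subset_span (mem_insert_of_mem _ (mem_image_of_mem _ hp))

theorem exists_prod_smul_mem_span_one {S : Set Nat.Primes} {x : ℚ} (hx : x ∈ primeFractions S) :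
    ∃ s : Finset Nat.Primes, ↑s ⊆ S ∧ (∏ p ∈ s, (p : ℤ)) • x ∈ span ℤ {(1 : ℚ)} := by
  classical
  induction hx using span_induction with
  | mem x hx =>
    obtain rfl | ⟨p, hp, rfl⟩ := hx
    · exact ⟨∅, by simp, by simp⟩
    · have hp0 : (p : ℚ) ≠ 0 := Nat.cast_ne_zero.2 p.2.ne_zero
      exact ⟨{p}, by simpa using hp, by simp [hp0]⟩
  | zero => exact ⟨∅, by simp, by simp⟩
  | add x y _ _ hx hy =>
    obtain ⟨s, hs, hsx⟩ := hx
    obtain ⟨t, ht, hty⟩ := hy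
    refine ⟨s ∪ t, by simpa using ⟨hs, ht⟩, ?_⟩
    rw [smul_add]
    exact add_mem (prod_smul_mem_of_subset Finset.subset_union_left hsx)
      (prod_smul_mem_of_subset Finset.subset_union_right hty)
  | smul n x _ hx =>
    obtain ⟨s, hs, hsx⟩ := hx
    exact ⟨s, hs, smul_comm n (∏ p ∈ s, (p : ℤ)) x ▸ smul_mem _ n hsx⟩

variable {ι ι' : Type*}

/-- The direct sum of the groups `primeFractions (P i)`, inside the direct sum of copies of `ℚ`. -/
noncomputable def sumFractions (P : ι → Set Nat.Primes) : Submodule ℤ (ι →₀ ℚ) :=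
  Finsupp.submodule fun i => primeFractions (P i)

theorem mem_sumFractions {P : ι → Set Nat.Primes} {q : ι →₀ ℚ} :
    q ∈ sumFractions P ↔ ∀ i, q i ∈ primeFractions (P i) :=
  Finsupp.mem_submodule_iff _ _

theorem single_mem_sumFractions {P : ι → Set Nat.Primes} {i : ι} {q : ℚ}
    (hq : q ∈ primeFractions (P i)) : Finsupp.single i q ∈ sumFractions P := by
  refine mem_sumFractions.2 fun j => ?_
  obtain rfl | hij := eq_or_ne i j
  · rwa [Finsupp.single_eq_same]
  · rw [Finsupp.single_eq_of_ne' hij]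
    exact zero_mem _

theorem exists_prod_smul_mem_span_single {P : ι → Set Nat.Primes} {q : ι →₀ ℚ}
    (hq : q ∈ sumFractions P) {E : Finset ι} (hqE : q ∈ Finsupp.supported ℚ ℤ (E : Set ι)) :
    ∃ s : Finset Nat.Primes, ↑s ⊆ ⋃ i ∈ E, P i ∧
      (∏ p ∈ s, (p : ℤ)) • q ∈ span ℤ ((fun i => Finsupp.single i (1 : ℚ)) '' (E : Set ι)) := by
  classical
  choose s hsP hs using fun i => exists_prod_smul_mem_span_one (mem_sumFractions.1 hq i)
  refine ⟨E.biUnion s, ?_, ?_⟩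
  · rw [Finset.coe_biUnion]
    exact iUnion₂_mono fun i _ => hsP i
  rw [← Finsupp.sum_single q, Finsupp.sum_of_support_subset q hqE _ (by simp), Finset.smul_sum]
  refine sum_mem fun i hi => ?_
  have hmem : (∏ p ∈ s i, (p : ℤ)) • Finsupp.single i (q i) ∈
      span ℤ ((fun i => Finsupp.single i (1 : ℚ)) '' (E : Set ι)) := by
    obtain ⟨n, hn⟩ := mem_span_singleton.1 (hs i)
    rw [Finsupp.smul_single, ← hn, ← Finsupp.smul_single]
    exact smul_mem _ n (subset_span (mem_image_of_mem _ hi))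
  exact prod_smul_mem_of_subset (Finset.subset_biUnion_of_mem s hi) hmem

variable {Q : Type*} [AddCommGroup Q]

theorem exists_finset_fg_of_injective {P : ι → Set Nat.Primes} {κ : Q →ₗ[ℤ] ι →₀ ℚ}
    (hκ : Function.Injective κ) (hP : ∀ x, κ x ∈ sumFractions P) {F : Submodule ℤ Q} (hF : F.FG) :
    ∃ (E : Finset ι) (L : Submodule ℤ Q), L.FG ∧ ∀ x ∈ pureClosure F,
      ∃ s : Finset Nat.Primes, ↑s ⊆ ⋃ i ∈ E, P i ∧ (∏ p ∈ s, (p : ℤ)) • x ∈ L := by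
  classical
  obtain ⟨t, rfl⟩ := hF
  let E := t.biUnion fun x => (κ x).support
  have hE : pureClosure (span ℤ t) ≤ (Finsupp.supported ℚ ℤ (E : Set ι)).comap κ := by
    intro x hx
    obtain ⟨a, ha, hax⟩ := mem_pureClosure.1 hx
    have htE : span ℤ t ≤ (Finsupp.supported ℚ ℤ (E : Set ι)).comap κ :=
      span_le.2 fun y hy =>
        Finset.coe_subset.2 (Finset.subset_biUnion_of_mem (fun x => (κ x).support) hy)
    rw [mem_comap, Finsupp.mem_supported, ← Finsupp.support_smul_eq ha, ← map_smul]
    exact htE hax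
  let L := span ℤ ((fun i => Finsupp.single i (1 : ℚ)) '' (E : Set ι))
  have := isNoetherian_of_fg_of_noetherian L (fg_span (E.finite_toSet.image _))
  refine ⟨E, L.comap κ, fg_of_fg_map_injective κ hκ ?_, fun x hx => ?_⟩
  · exact isNoetherian_submodule.1 this _ (map_comap_le κ L)
  · obtain ⟨s, hsP, hs⟩ := exists_prod_smul_mem_span_single (hP x) (hE hx)
    exact ⟨s, hsP, by rwa [mem_comap, map_smul]⟩

theorem pureClosure_fg_of_finite_inter {P : ι → Set Nat.Primes} {P' : ι' → Set Nat.Primes}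
    (hPP' : ∀ i j, (P i ∩ P' j).Finite)
    {κ : Q →ₗ[ℤ] ι →₀ ℚ} (hκ : Function.Injective κ) (hP : ∀ x, κ x ∈ sumFractions P)
    {κ' : Q →ₗ[ℤ] ι' →₀ ℚ} (hκ' : Function.Injective κ') (hP' : ∀ x, κ' x ∈ sumFractions P')
    {F : Submodule ℤ Q} (hF : F.FG) : (pureClosure F).FG := by
  classical
  obtain ⟨E, L, hL, hEL⟩ := exists_finset_fg_of_injective hκ hP hF
  obtain ⟨E', L', hL', hEL'⟩ := exists_finset_fg_of_injective hκ' hP' hF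
  have hfin : ((⋃ i ∈ E, P i) ∩ ⋃ j ∈ E', P' j).Finite := by
    simp only [iUnion₂_inter, inter_iUnion₂]
    exact E'.finite_toSet.biUnion fun j _ => E.finite_toSet.biUnion fun i _ => hPP' i j
  have : Module.IsTorsionFree ℤ Q := hκ.moduleIsTorsionFree _ (map_zsmul κ)
  refine fg_of_forall_smul_mem (hL.sup hL') (d := ∏ p ∈ hfin.toFinset, (p : ℤ)) ?_ fun x hx => ?_
  · exact Finset.prod_ne_zero_iff.2 fun p _ => Nat.cast_ne_zero.2 p.2.ne_zero
  · obtain ⟨s, hs, hsx⟩ := hEL x hx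
    obtain ⟨t, ht, htx⟩ := hEL' x hx
    have hcop : Pairwise fun p q : Nat.Primes => IsCoprime (p : ℤ) (q : ℤ) := fun p q hpq =>
      Nat.isCoprime_iff_coprime.2 ((Nat.coprime_primes p.2 q.2).2 (Subtype.coe_ne_coe.2 hpq))
    obtain ⟨a, b, hab⟩ := Ideal.mem_span_pair.1 <|
      prod_mem_span_pair_prod (s := s) (t := t) (w := hfin.toFinset) hcop fun p hp =>
        hfin.mem_toFinset.2 ⟨hs (Finset.mem_inter.1 hp).1, ht (Finset.mem_inter.1 hp).2⟩
    rw [← hab, add_smul, mul_smul, mul_smul]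
    exact add_mem (mem_sup_left (smul_mem _ a hsx)) (mem_sup_right (smul_mem _ b htx))

theorem isAleph1Free_of_finite_inter {P : ι → Set Nat.Primes} {P' : ι' → Set Nat.Primes}
    (hPP' : ∀ i j, (P i ∩ P' j).Finite)
    {κ : Q →ₗ[ℤ] ι →₀ ℚ} (hκ : Function.Injective κ) (hP : ∀ x, κ x ∈ sumFractions P)
    {κ' : Q →ₗ[ℤ] ι' →₀ ℚ} (hκ' : Function.Injective κ') (hP' : ∀ x, κ' x ∈ sumFractions P') :
    IsAleph1Free ℤ Q := by
  intro N _
  have : Module.IsTorsionFree ℤ Q := hκ.moduleIsTorsionFree _ (map_zsmul κ)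
  exact free_of_forall_pureClosure_fg fun F hF => pureClosure_fg_of_finite_inter hPP'
    (κ := κ ∘ₗ N.subtype) (hκ.comp N.subtype_injective) (fun x => hP x)
    (κ' := κ' ∘ₗ N.subtype) (hκ'.comp N.subtype_injective) (fun x => hP' x) hF

theorem ker_lsubtypeDomain_compl {R K : Type*} [Semiring R] [AddCommMonoid K] [Module R K]
    (D : Set ι) :
    LinearMap.ker (Finsupp.lsubtypeDomain Dᶜ : (ι →₀ K) →ₗ[R] _) = Finsupp.supported K R D := by
  ext q
  rw [LinearMap.mem_ker, Finsupp.lsubtypeDomain_apply, Finsupp.subtypeDomain_eq_zero_iff',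
    Finsupp.mem_supported']
  rfl

theorem exists_injective_quotient {P : ι → Set Nat.Primes} {κ : Q →ₗ[ℤ] ι →₀ ℚ}
    (hP : ∀ x, κ x ∈ sumFractions P) {N : Submodule ℤ Q} (hN : supportHull κ N ≤ N) :
    ∃ (D : Set ι) (κN : Q ⧸ N →ₗ[ℤ] D →₀ ℚ), Function.Injective κN ∧
      ∀ y, κN y ∈ sumFractions fun i : D => P i := by
  let ρ : (ι →₀ ℚ) →ₗ[ℤ] ↥(supportUnion κ N)ᶜ →₀ ℚ := Finsupp.lsubtypeDomain _
  have hker : LinearMap.ker (ρ ∘ₗ κ) = supportHull κ N := by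
    rw [LinearMap.ker_comp, ker_lsubtypeDomain_compl, supportHull]
  have hker' : N = LinearMap.ker (ρ ∘ₗ κ) := (le_supportHull κ N).antisymm hN |>.trans hker.symm
  refine ⟨_, N.liftQ (ρ ∘ₗ κ) hker'.le, LinearMap.ker_eq_bot.1 (ker_liftQ_eq_bot' _ _ hker'), ?_⟩
  refine fun y => y.induction_on _ fun x => mem_sumFractions.2 fun i => ?_
  exact mem_sumFractions.1 (hP x) i

theorem free_of_finite_inter {P : ι → Set Nat.Primes} {P' : ι' → Set Nat.Primes}
    (hPP' : ∀ i j, (P i ∩ P' j).Finite) (hQ : IsAleph1Free ℤ Q)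
    {κ : Q →ₗ[ℤ] ι →₀ ℚ} (hκ : (LinearMap.ker κ : Set Q).Countable)
    (hP : ∀ x, κ x ∈ sumFractions P)
    {κ' : Q →ₗ[ℤ] ι' →₀ ℚ} (hκ' : (LinearMap.ker κ' : Set Q).Countable)
    (hP' : ∀ x, κ' x ∈ sumFractions P') : Module.Free ℤ Q := by
  refine free_of_forall_isAleph1Free_quotient hκ hκ' hQ fun N hN hN' => ?_
  obtain ⟨D, κN, hκN, hPN⟩ := exists_injective_quotient hP hN
  obtain ⟨D', κN', hκN', hPN'⟩ := exists_injective_quotient hP' hN'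
  exact isAleph1Free_of_finite_inter (P := fun i : D => P i) (P' := fun j : D' => P' j)
    (fun i j => hPP' i j) hκN hPN hκN' hPN'

theorem free_of_countable_setOf_infinite_inter {P : ι → Set Nat.Primes} {P' : ι' → Set Nat.Primes}
    (hPP' : {i | ∃ j, (P i ∩ P' j).Infinite}.Countable) (hQ : IsAleph1Free ℤ Q)
    {κ : Q →ₗ[ℤ] ι →₀ ℚ} (hκ : (LinearMap.ker κ : Set Q).Countable)
    (hP : ∀ x, κ x ∈ sumFractions P)
    {κ' : Q →ₗ[ℤ] ι' →₀ ℚ} (hκ' : (LinearMap.ker κ' : Set Q).Countable)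
    (hP' : ∀ x, κ' x ∈ sumFractions P') : Module.Free ℤ Q := by
  let D := {i | ∃ j, (P i ∩ P' j).Infinite}
  let ρ : (ι →₀ ℚ) →ₗ[ℤ] ↥Dᶜ →₀ ℚ := Finsupp.lsubtypeDomain _
  have hker : (LinearMap.ker (ρ ∘ₗ κ) : Set Q).Countable := by
    rw [LinearMap.ker_comp, ker_lsubtypeDomain_compl]
    exact countable_preimage_of_countable_ker hκ (countable_supported ℤ hPP')
  refine free_of_finite_inter (P := fun i : ↥Dᶜ => P i) (fun i j => ?_) hQ hker
    (fun x => mem_sumFractions.2 fun i => mem_sumFractions.1 (hP x) i) hκ' hP'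
  exact not_infinite.1 fun hij => i.2 ⟨j, hij⟩

end Fractions

section Extension

theorem finite_setOf_exists_eq_nsmul {a : ℤ} (ha : a ≠ 0) : {n : ℕ | ∃ b : ℤ, a = n • b}.Finite :=
  a.natAbs.divisors.finite_toSet.subset fun n ⟨b, hb⟩ => Nat.mem_divisors.2
    ⟨Int.natCast_dvd.1 ⟨b, by rwa [nsmul_eq_mul] at hb⟩, Int.natAbs_ne_zero.2 ha⟩

theorem countable_setOf_infinite_dvd_sub {M : Type*} [AddCommGroup M] [Module.Free ℤ M] {C : Set M}
    (hC : C.Countable) : {x | {n : ℕ | ∃ y, x - n • y ∈ C}.Infinite}.Countable := by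
  let b := Module.Free.chooseBasis ℤ M
  let J := ⋃ c ∈ C, ((b.repr c).support : Set (Module.Free.ChooseBasisIndex ℤ M))
  have hJ : J.Countable := hC.biUnion fun c _ => (b.repr c).support.countable_toSet
  refine ((countable_supported ℤ (K := ℤ) hJ).preimage b.repr.injective).mono fun x hx => ?_
  refine (Finsupp.mem_supported' ℤ _).2 fun j hj => by_contra fun hxj => hx ?_
  refine (finite_setOf_exists_eq_nsmul hxj).subset fun n ⟨y, hy⟩ => ⟨b.repr y j, ?_⟩
  have hcj : b.repr (x - n • y) j = 0 :=
    Finsupp.notMem_support_iff.1 fun h => hj (mem_biUnion hy h)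
  rwa [map_sub, map_nsmul, Finsupp.sub_apply, Finsupp.smul_apply, sub_eq_zero] at hcj

variable {ι ι' G G' : Type*} [AddCommGroup G] [AddCommGroup G']

/-- `G` is an extension of the direct sum of the groups `primeFractions (P i)` by a countable
group. -/
def IsCountableExtension (P : ι → Set Nat.Primes) (G : Type*) [AddCommGroup G] : Prop :=
  ∃ κ : G →ₗ[ℤ] ι →₀ ℚ, (LinearMap.ker κ : Set G).Countable ∧ LinearMap.range κ = sumFractions P

theorem exists_injective_apply_eq_single {P : ι → Set Nat.Primes} {κ : G →ₗ[ℤ] ι →₀ ℚ}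
    (hκ : LinearMap.range κ = sumFractions P) :
    ∃ x : ι → G, Function.Injective x ∧ ∀ i, κ (x i) = Finsupp.single i 1 := by
  choose x hx using fun i =>
    LinearMap.mem_range.1 (hκ ▸ single_mem_sumFractions (one_mem_primeFractions (P i)))
  refine ⟨x, .of_comp (f := κ) ?_, hx⟩
  simpa only [Function.comp_def, hx] using Finsupp.single_left_injective one_ne_zero

namespace IsCountableExtension

variable {P : ι → Set Nat.Primes} {P' : ι' → Set Nat.Primes}

theorem of_equiv (hG : IsCountableExtension P G) (e : G' ≃ₗ[ℤ] G) : IsCountableExtension P G' := by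
  obtain ⟨κ, hker, hrange⟩ := hG
  refine ⟨κ ∘ₗ e.toLinearMap, ?_, by rw [LinearMap.range_comp_of_range_eq_top _ e.range, hrange]⟩
  rw [LinearMap.ker_comp]
  exact hker.preimage e.injective

theorem free_of_injective (hG : IsCountableExtension P G) (hG' : IsCountableExtension P' G')
    (hPP' : {i | ∃ j, (P i ∩ P' j).Infinite}.Countable) (hfree : IsAleph1Free ℤ G)
    {H : Type*} [AddCommGroup H] {f : H →ₗ[ℤ] G} (hf : Function.Injective f)
    {f' : H →ₗ[ℤ] G'} (hf' : Function.Injective f') : Module.Free ℤ H := by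
  obtain ⟨κ, hker, hrange⟩ := hG
  obtain ⟨κ', hker', hrange'⟩ := hG'
  refine free_of_countable_setOf_infinite_inter hPP' (hfree.of_injective f hf)
    (κ := κ ∘ₗ f) ?_ (fun x => hrange ▸ ⟨f x, rfl⟩) (κ' := κ' ∘ₗ f') ?_
    (fun x => hrange' ▸ ⟨f' x, rfl⟩)
  · exact hker.preimage hf
  · exact hker'.preimage hf'

theorem not_free [Uncountable ι] (hP : ∀ i, (P i).Infinite) (hG : IsCountableExtension P G) :
    ¬ Module.Free ℤ G := by
  intro _
  obtain ⟨κ, hker, hrange⟩ := hG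
  obtain ⟨x, hxinj, hx⟩ := exists_injective_apply_eq_single hrange
  refine not_countable_univ (α := ι) ?_
  refine ((countable_setOf_infinite_dvd_sub hker).preimage hxinj).mono fun i _ => ?_
  refine ((hP i).image Nat.Primes.coe_nat_injective.injOn).mono ?_
  rintro _ ⟨p, hp, rfl⟩
  obtain ⟨y, hy⟩ : ∃ y, κ y = Finsupp.single i (p : ℚ)⁻¹ :=
    LinearMap.mem_range.1 (hrange ▸ single_mem_sumFractions (inv_mem_primeFractions hp))
  have hp0 : (p : ℚ) ≠ 0 := Nat.cast_ne_zero.2 p.2.ne_zero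
  refine ⟨y, LinearMap.sub_mem_ker_iff.2 ?_⟩
  rw [map_nsmul, hx, hy, Finsupp.smul_single, nsmul_eq_mul, mul_inv_cancel₀ hp0]

open Cardinal in
theorem lift_mk_eq.{v, w} {ι : Type v} {P : ι → Set Nat.Primes} {G : Type w} [AddCommGroup G]
    [Infinite ι] (hG : IsCountableExtension P G) : lift.{v} #G = lift.{w} #ι := by
  obtain ⟨κ, hker, hrange⟩ := hG
  refine le_antisymm ?_ ?_
  · have hfiber (q : ι →₀ ℚ) : lift.{v} #(κ ⁻¹' {q}) ≤ ℵ₀ := by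
      rw [lift_le_aleph0, le_aleph0_iff_set_countable]
      exact countable_preimage_of_countable_ker hker (countable_singleton q)
    refine (lift_mk_le_lift_mk_mul_of_lift_mk_preimage_le κ hfiber).trans_eq ?_
    simp
  · obtain ⟨x, hx, -⟩ := exists_injective_apply_eq_single hrange
    exact lift_mk_le_lift_mk_of_injective hx

end IsCountableExtension

theorem isCountableExtension_comap_map {M V : Type*} [AddCommGroup M] [AddCommGroup V] [Module ℚ V]
    {π : M →ₗ[ℤ] V} (hker : (LinearMap.ker π : Set M).Countable)
    {T : (ι →₀ ℚ) →ₗ[ℚ] V} (hT : Function.Injective T) (hTπ : ∀ q, T q ∈ LinearMap.range π)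
    (P : ι → Set Nat.Primes) :
    IsCountableExtension P (((sumFractions P).map (T.restrictScalars ℤ)).comap π) := by
  obtain ⟨S, hS⟩ := T.exists_leftInverse_of_injective (LinearMap.ker_eq_bot.2 hT)
  have hST (q : ι →₀ ℚ) : S (T q) = q := LinearMap.congr_fun hS q
  refine ⟨S.restrictScalars ℤ ∘ₗ π ∘ₗ Submodule.subtype _, ?_, le_antisymm ?_ ?_⟩
  · refine (hker.preimage Subtype.val_injective).mono ?_
    rintro ⟨x, q, hq, hqx⟩ hx
    have hq0 : q = 0 := by
      rw [← hST q, ← hx]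
      exact congrArg S hqx
    exact hqx.symm.trans (hq0 ▸ map_zero T)
  · rintro _ ⟨⟨x, q, hq, hqx⟩, rfl⟩
    change S (π x) ∈ _
    rw [← hqx]
    exact (hST q).symm ▸ hq
  · intro q hq
    obtain ⟨x, hx⟩ := hTπ q
    refine ⟨⟨x, q, hq, hx.symm⟩, ?_⟩
    change S (π x) = q
    rw [hx, hST]

end Extension

section Existence

/-- The class of an integer sequence modulo finitely supported sequences. It is taken among the
germs of rational sequences, which form a rational vector space. -/
noncomputable def intGerm : (ℕ → ℤ) →ₗ[ℤ] Filter.Germ (.cofinite : Filter ℕ) ℚ :=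
  AddMonoidHom.toIntLinearMap
    ((Filter.Germ.coeAddHom .cofinite).comp ((Int.castAddHom ℚ).compLeft ℕ))

theorem intGerm_eq_coe_iff {x : ℕ → ℤ} {r : ℕ → ℚ} :
    intGerm x = (r : Filter.Germ .cofinite ℚ) ↔ ∀ᶠ n in .cofinite, x n = r n :=
  Filter.Germ.coe_eq

theorem countable_ker_intGerm : (LinearMap.ker intGerm : Set (ℕ → ℤ)).Countable := by
  refine (countable_range ((⇑) : (ℕ →₀ ℤ) → ℕ → ℤ)).mono fun x hx => ?_
  have hfin : ∀ᶠ n in .cofinite, (x n : ℚ) = 0 := intGerm_eq_coe_iff.1 hx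
  refine ⟨Finsupp.ofSupportFinite x ?_, rfl⟩
  simpa only [Function.support, Int.cast_eq_zero] using Filter.eventually_cofinite.1 hfin

theorem smul_intGerm_factorial_smul_mem_range (q : ℚ) (x : ℕ → ℤ) :
    q • intGerm (fun n => n.factorial • x n) ∈ LinearMap.range intGerm := by
  refine ⟨fun n => q.num * (n.factorial / q.den : ℕ) * x n, intGerm_eq_coe_iff.2 ?_⟩
  rw [Nat.cofinite_eq_atTop]
  filter_upwards [Filter.eventually_ge_atTop q.den] with n hn
  obtain ⟨m, hm⟩ := Nat.dvd_factorial q.den_pos hn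
  change _ = q • ((n.factorial • x n : ℤ) : ℚ)
  rw [hm, Nat.mul_div_cancel_left _ q.den_pos]
  push_cast
  rw [← q.mul_den_eq_num, smul_eq_mul, nsmul_eq_mul]
  push_cast
  ring

theorem exists_uncountable_submodule_le_range_intGerm :
    ∃ D : Submodule ℚ (Filter.Germ (.cofinite : Filter ℕ) ℚ), Uncountable D ∧
      ∀ v ∈ D, v ∈ LinearMap.range intGerm := by
  let μ : (ℕ → ℤ) →ₗ[ℤ] ℕ → ℤ := LinearMap.pi fun n => n.factorial • LinearMap.proj n
  have hμ : Function.Injective μ := fun x y hxy => funext fun n =>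
    smul_right_injective ℤ n.factorial_ne_zero (congrFun hxy n)
  refine ⟨span ℚ (range (intGerm ∘ μ)), ?_, fun v hv => ?_⟩
  · by_contra hD
    rw [not_uncountable_iff] at hD
    have hpre := countable_preimage_of_countable_ker countable_ker_intGerm (countable_coe_iff.1 hD)
    have hspan (x : ℕ → ℤ) : intGerm (μ x) ∈ span ℚ (range (intGerm ∘ μ)) := subset_span ⟨x, rfl⟩
    have huniv : (univ : Set (ℕ → ℤ)).Countable := (hpre.preimage hμ).mono fun x _ => hspan x
    have : Uncountable (ℕ → ℤ) := by
      rw [← Cardinal.aleph0_lt_mk_iff]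
      simp [Cardinal.aleph0_lt_continuum]
    exact not_countable_univ huniv
  · suffices hq : ∀ q : ℚ, q • v ∈ LinearMap.range intGerm by simpa using hq 1
    induction hv using span_induction with
    | mem v hv =>
      obtain ⟨x, rfl⟩ := hv
      exact fun q => smul_intGerm_factorial_smul_mem_range q x
    | zero => simp
    | add v w _ _ hv hw => exact fun q => smul_add q v w ▸ add_mem (hv q) (hw q)
    | smul r v _ hv => exact fun q => smul_smul q r v ▸ hv (q * r)

open Cardinal in
theorem exists_injective_finsupp.{v, w} {ι : Type v} {V : Type w} [AddCommGroup V] [Module ℚ V]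
    [Uncountable V] (hι : #ι ≤ ℵ₁) : ∃ T : (ι →₀ ℚ) →ₗ[ℚ] V, Function.Injective T := by
  let b := Module.Basis.ofVectorSpace ℚ V
  have hb : Uncountable (Module.Basis.ofVectorSpaceIndex ℚ V) := by
    by_contra hb
    rw [not_uncountable_iff] at hb
    exact not_countable (α := V) b.repr.injective.countable
  obtain ⟨e⟩ : Nonempty (ι ↪ Module.Basis.ofVectorSpaceIndex ℚ V) := by
    rw [← lift_mk_le']
    calc lift.{w} #ι ≤ ℵ₁ := by simpa using hι
      _ ≤ _ := by simp [aleph_one_le_iff]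
  exact ⟨b.repr.symm.toLinearMap ∘ₗ Finsupp.lmapDomain ℚ ℚ e,
    b.repr.symm.injective.comp (Finsupp.mapDomain_injective e.injective)⟩

open Cardinal in
theorem exists_isCountableExtension {ι : Type*} (hι : #ι ≤ ℵ₁) (P : ι → Set Nat.Primes) :
    ∃ G : Submodule ℤ (ℕ → ℤ), IsCountableExtension P G := by
  obtain ⟨D, _, hD⟩ := exists_uncountable_submodule_le_range_intGerm
  obtain ⟨T, hT⟩ := exists_injective_finsupp (V := D) hι
  exact ⟨_, isCountableExtension_comap_map countable_ker_intGerm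
    (T := D.subtype ∘ₗ T) (D.subtype_injective.comp hT) (fun q => hD _ (T q).2) P⟩

end Existence

section Families

/-- An injective enumeration by primes of the finite binary sequences, i.e. of the nodes of the
binary tree. -/
noncomputable def nodePrime : List Bool ↪ Nat.Primes :=
  (Encodable.encode' (List Bool)).trans (Infinite.natEmbedding Nat.Primes)

/-- The primes attached to the nodes along a branch of the binary tree; these sets form an almost
disjoint family. -/
def branchPrimes (c : ℕ → Bool) : Set Nat.Primes :=
  range fun n => nodePrime ((List.range n).map c)

theorem infinite_branchPrimes (c : ℕ → Bool) : (branchPrimes c).Infinite :=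
  infinite_range_of_injective fun m n h => by
    simpa using congrArg List.length (nodePrime.injective h)

theorem finite_branchPrimes_inter {c d : ℕ → Bool} (h : c ≠ d) :
    (branchPrimes c ∩ branchPrimes d).Finite := by
  obtain ⟨k, hk⟩ := Function.ne_iff.1 h
  refine ((finite_Iic k).image fun n => nodePrime ((List.range n).map c)).subset ?_
  rintro _ ⟨⟨m, rfl⟩, ⟨n, hn⟩⟩
  have hmap : (List.range n).map d = (List.range m).map c := nodePrime.injective hn
  obtain rfl : n = m := by simpa using congrArg List.length hmap
  refine ⟨n, mem_Iic.2 (not_lt.1 fun hkn => hk ?_), rfl⟩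
  exact (List.map_inj_left.1 hmap k (List.mem_range.2 hkn)).symm

open Cardinal

theorem exists_forall_ne_countable_setOf_exists_eq {W : Type*} [LinearOrder W]
    (hW : ∀ w : W, (Iio w).Countable) (hcard : #W ≤ 𝔠) :
    ∃ c : Set W → W → (ℕ → Bool), ∀ X Y, X ≠ Y → {v | ∃ w, c X v = c Y w}.Countable := by
  choose e he using fun w => countable_iff_exists_injOn.1 (hW w)
  obtain ⟨j⟩ : Nonempty (W × Set ℕ ↪ (ℕ → Bool)) := by
    rw [← lift_mk_le']
    simpa using (mul_le_mul_left hcard 𝔠).trans_eq continuum_mul_self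
  -- If the codes of `X` and `Y` at `w` coincide, then `X` and `Y` agree below `w`.
  refine ⟨fun X w => j (w, e w '' (X ∩ Iio w)), fun X Y hXY => ?_⟩
  obtain ⟨u, hu⟩ : ∃ u, ¬ (u ∈ X ↔ u ∈ Y) := by
    by_contra! h
    exact hXY (Set.ext h)
  refine (Iio_insert (a := u) ▸ (hW u).insert u).mono ?_
  rintro v ⟨w, hvw⟩
  obtain ⟨rfl, himage⟩ := Prod.mk.inj (j.injective hvw)
  refine not_lt.1 fun huv => hu ?_
  have hXY' := ((he v).image_eq_image_iff inter_subset_right inter_subset_right).1 himage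
  simpa only [mem_inter_iff, mem_Iio, huv, and_true] using Set.ext_iff.1 hXY' u

theorem exists_linearOrder_countable_Iio :
    ∃ (W : Type) (_ : LinearOrder W), #W = ℵ₁ ∧ ∀ w : W, (Iio w).Countable := by
  refine ⟨(aleph 1).ord.ToType, inferInstance, mk_ord_toType _, fun w => ?_⟩
  rw [← le_aleph0_iff_set_countable, ← Order.lt_succ_iff, succ_aleph0]
  have := mk_Iio_lt w (by rw [mk_ord_toType]; exact (Ordinal.type_toType _).symm)
  simpa using this

theorem exists_forall_ne_countable_setOf_infinite_inter :
    ∃ (W : Type) (P : Set W → W → Set Nat.Primes), #W = ℵ₁ ∧ (∀ X w, (P X w).Infinite) ∧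
      ∀ X Y, X ≠ Y → {v | ∃ w, (P X v ∩ P Y w).Infinite}.Countable := by
  obtain ⟨W, _, hW, hIio⟩ := exists_linearOrder_countable_Iio
  obtain ⟨c, hc⟩ :=
    exists_forall_ne_countable_setOf_exists_eq hIio (hW.trans_le aleph_one_le_continuum)
  refine ⟨W, fun X w => branchPrimes (c X w), hW, fun X w => infinite_branchPrimes _,
    fun X Y hXY => (hc X Y hXY).mono ?_⟩
  rintro v ⟨w, hvw⟩
  exact ⟨w, by_contra fun hne => hvw (finite_branchPrimes_inter hne)⟩

theorem exists_addSubgroup_isCountableExtension {A ι : Type*} [AddCommGroup A] {φ : (ℕ → ℤ) →+ A}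
    (hφ : Function.Injective φ) (hι : #ι ≤ ℵ₁) (P : ι → Set Nat.Primes) :
    ∃ G : AddSubgroup A, IsAleph1Free ℤ G ∧ IsCountableExtension P G := by
  obtain ⟨G, hG⟩ := exists_isCountableExtension hι P
  let e : G ≃ₗ[ℤ] (G.map φ.toIntLinearMap).toAddSubgroup :=
    Submodule.equivMapOfInjective φ.toIntLinearMap hφ G
  exact ⟨_, (isAleph1Free_pi ℕ).of_injective (G.subtype ∘ₗ e.symm.toLinearMap)
    (G.subtype_injective.comp e.symm.injective), hG.of_equiv e.symm⟩

end Families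

end AlmostDisjoint

open AlmostDisjoint in
/-- let `A` be an abelian group containing a subgroup isomorphic to the
Baer–Specker group `ℤ^ω` (i.e. admitting an injective homomorphism from `ℕ → ℤ`).
Then there is a family of `2^{ℵ₁}` subgroups of `A`, each `ℵ₁`-free (every countable
subgroup is free), of cardinality `ℵ₁` and not free, which are pairwise almost
disjoint. -/
theorem stmt13 (A : Type u) [AddCommGroup A]
    (hA : ∃ φ : (ℕ → ℤ) →+ A, Function.Injective φ) :
    ∃ (I : Type u) (G : I → AddSubgroup A),
      Cardinal.mk I = 2 ^ Cardinal.aleph 1 ∧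
      (∀ α, ∀ K : AddSubgroup (G α), Countable K → Module.Free ℤ K) ∧
      (∀ α, Cardinal.mk (G α) = Cardinal.aleph 1) ∧
      (∀ α, ¬ Module.Free ℤ (G α)) ∧
      (∀ α β, α ≠ β →
        ∀ (H : Type u) [AddCommGroup H],
          (∃ φ : H →+ A, Function.Injective φ ∧ ∀ h, φ h ∈ G α) →
          (∃ ψ : H →+ A, Function.Injective ψ ∧ ∀ h, ψ h ∈ G β) →
          Module.Free ℤ H) := by
  obtain ⟨φ, hφ⟩ := hA
  obtain ⟨W, P, hW, hPinf, hP⟩ := exists_forall_ne_countable_setOf_infinite_inter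
  have : Uncountable W := by
    rw [← Cardinal.aleph0_lt_mk_iff, hW]
    exact Cardinal.aleph0_lt_aleph_one
  choose G hfree hG using fun X => exists_addSubgroup_isCountableExtension hφ hW.le (P X)
  refine ⟨ULift.{u} (Set W), fun α => G α.down, by simp [hW],
    fun α K hK => hfree α.down (AddSubgroup.toIntSubmodule K) hK, fun α => ?_,
    fun α => (hG α.down).not_free (hPinf α.down), ?_⟩
  · simpa [hW] using (hG α.down).lift_mk_eq
  · rintro α β hαβ H _ ⟨f, hf, hfG⟩ ⟨g, hg, hgG⟩
    refine (hG α.down).free_of_injective (hG β.down) (hP _ _ (ULift.down_injective.ne hαβ))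
      (hfree α.down) (f := (f.codRestrict _ hfG).toIntLinearMap) ?_
      (f' := (g.codRestrict _ hgG).toIntLinearMap) ?_
    · exact fun x y h => hf (congrArg Subtype.val h)
    · exact fun x y h => hg (congrArg Subtype.val h)
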